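/- Let E be a measurable space, m a σ-finite measure on E, and r : E × E → [0,∞] a measurable function with r(x,y) = r(y,x) for all x,y ∈ E. For a measure λ on E write Rλ(x) = ∫_E r(x,y) λ(dy), and for measurable g : E → [0,∞] write Rg(x) = ∫_E r(x,y) g(y) m(dy). Assume there exists a sequence of measurable functions g_n : E → [0,∞], n ∈ ℕ, such that for every x ∈ E the sequence n ↦ Rg_n(x) is nondecreasing, Rg_n(x) ≤ 1 for all n and x, and Rg_n(x) → 1 as n → ∞ for every x ∈ E. Let μ be a finite measure on E with Rμ(x) < ∞ for m-almost every x ∈ E, let h : E → ℝ be measurable with h(x) ≤ 0 for all x ∈ E and ∫_E r(x,y)|h(y)| m(dy) < ∞ for m-almost every x ∈ E, and let u : E → ℝ be measurable with u(x) = Rμ(x) − ∫_E r(x,y)(−h(y)) m(dy) for m-almost every x ∈ E. If u(x) ≥ 0 for m-almost every x ∈ E, then h ∈ L¹(E;m) and ∫_E |h| dm ≤ μ(E). -/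

import Mathlib

open MeasureTheory

/-!
By Tonelli, potentials satisfy the reciprocity `∫ Rν dσ = ∫ R*σ dν`, where `R*` is the potential of
the transposed kernel. Integrating a domination `Rν ≤ Rμ` against measures `σₙ` with `R*σₙ ≤ 1` and
`R*σₙ → 1` therefore gives `ν(Y) ≤ μ(Y)`, by Fatou's lemma on the side of `ν`. A nonnegative
solution `u = Rμ - R|h|` is precisely a domination of `R|h|` by `Rμ`, so the measure `|h| ρ` has at
most the mass of `μ`.
-/

section Potential

open Filter Function
open scoped ENNReal

variable {X Y ι : Type*} [MeasurableSpace Y] {ρ μ ν : Measure Y}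
  {r : X → Y → ℝ≥0∞}

/-- The potential `Rν(x) = ∫ r(x, y) ν(dy)` of a measure. The potential of a function `f` relative
to a reference measure `ρ` is encoded as the potential of `ρ.withDensity f`. -/
noncomputable def potential (r : X → Y → ℝ≥0∞) (ν : Measure Y) (x : X) : ℝ≥0∞ :=
  ∫⁻ y, r x y ∂ν

theorem potential_withDensity {f : Y → ℝ≥0∞} {x : X} (hr : AEMeasurable (r x) ρ)
    (hf : AEMeasurable f ρ) :
    potential r (ρ.withDensity f) x = ∫⁻ y, r x y * f y ∂ρ := by
  simp only [mul_comm (r x _)]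
  exact lintegral_withDensity_eq_lintegral_mul₀ hf hr

variable [MeasurableSpace X] {m : Measure X}

theorem measurable_potential [SFinite ν] (hr : Measurable (uncurry r)) :
    Measurable (potential r ν) :=
  hr.lintegral_prod_right

theorem lintegral_potential_comm {σ : Measure X} [SFinite σ] [SFinite ν]
    (hr : Measurable (uncurry r)) :
    ∫⁻ x, potential r ν x ∂σ = ∫⁻ y, potential (flip r) σ y ∂ν :=
  lintegral_lintegral_swap hr.aemeasurable

theorem lintegral_potential_flip_le_of_potential_le {σ : Measure X} [SFinite σ] [SFinite ν]
    [SFinite μ] (hr : Measurable (uncurry r))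
    (hle : ∀ᵐ y ∂μ, potential (flip r) σ y ≤ 1)
    (hdom : ∀ᵐ x ∂σ, potential r ν x ≤ potential r μ x) :
    ∫⁻ y, potential (flip r) σ y ∂ν ≤ μ Set.univ :=
  calc ∫⁻ y, potential (flip r) σ y ∂ν
      = ∫⁻ x, potential r ν x ∂σ := (lintegral_potential_comm hr).symm
    _ ≤ ∫⁻ x, potential r μ x ∂σ := lintegral_mono_ae hdom
    _ = ∫⁻ y, potential (flip r) σ y ∂μ := lintegral_potential_comm hr
    _ ≤ ∫⁻ _, 1 ∂μ := lintegral_mono_ae hle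
    _ = μ Set.univ := lintegral_one

theorem measure_univ_le_of_potential_le {l : Filter ι} [l.NeBot] [l.IsCountablyGenerated]
    {σ : ι → Measure X} [∀ i, SFinite (σ i)] [SFinite ν] [SFinite μ]
    (hr : Measurable (uncurry r))
    (hle : ∀ i, ∀ᵐ y ∂μ, potential (flip r) (σ i) y ≤ 1)
    (hliminf : ∀ᵐ y ∂ν, 1 ≤ liminf (fun i => potential (flip r) (σ i) y) l)
    (hdom : ∀ i, ∀ᵐ x ∂σ i, potential r ν x ≤ potential r μ x) :
    ν Set.univ ≤ μ Set.univ :=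
  calc ν Set.univ
      = ∫⁻ _, 1 ∂ν := lintegral_one.symm
    _ ≤ ∫⁻ y, liminf (fun i => potential (flip r) (σ i) y) l ∂ν := lintegral_mono_ae hliminf
    _ ≤ liminf (fun i => ∫⁻ y, potential (flip r) (σ i) y ∂ν) l :=
      lintegral_liminf_le fun _ => measurable_potential (hr.comp measurable_swap)
    _ ≤ μ Set.univ := liminf_le_of_frequently_le' <| .of_forall fun i =>
      lintegral_potential_flip_le_of_potential_le hr (hle i) (hdom i)

theorem lintegral_le_measure_univ_of_potential_le {l : Filter ι} [l.NeBot]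
    [l.IsCountablyGenerated] [SFinite m] [SFinite ρ] [SFinite μ] {g : ι → X → ℝ≥0∞}
    {f : Y → ℝ≥0∞} (hr : Measurable (uncurry r)) (hg : ∀ i, AEMeasurable (g i) m)
    (hle : ∀ i, ∀ᵐ y ∂μ, ∫⁻ x, r x y * g i x ∂m ≤ 1)
    (hliminf : ∀ᵐ y ∂ρ, 1 ≤ liminf (fun i => ∫⁻ x, r x y * g i x ∂m) l)
    (hf : AEMeasurable f ρ)
    (hdom : ∀ᵐ x ∂m, ∫⁻ y, r x y * f y ∂ρ ≤ ∫⁻ y, r x y ∂μ) :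
    ∫⁻ y, f y ∂ρ ≤ μ Set.univ := by
  have hflip (i : ι) (y : Y) :
      potential (flip r) (m.withDensity (g i)) y = ∫⁻ x, r x y * g i x ∂m :=
    potential_withDensity hr.of_uncurry_right.aemeasurable (hg i)
  have hdens (x : X) : potential r (ρ.withDensity f) x = ∫⁻ y, r x y * f y ∂ρ :=
    potential_withDensity hr.of_uncurry_left.aemeasurable hf
  have hmass : ρ.withDensity f Set.univ ≤ μ Set.univ := by
    refine measure_univ_le_of_potential_le (l := l) (σ := fun i => m.withDensity (g i)) hr
      ?_ ?_ fun i => ?_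
    · simpa only [hflip] using hle
    · simp only [hflip]
      exact (withDensity_absolutelyContinuous ρ f).ae_le hliminf
    · simp only [hdens]
      exact (withDensity_absolutelyContinuous m (g i)).ae_le hdom
  rwa [withDensity_apply _ .univ, setLIntegral_univ] at hmass

theorem nonlinearity_integrable_of_nonneg_solution_general {l : Filter ι} [l.NeBot]
    [l.IsCountablyGenerated] [SFinite m] [SFinite ρ] [IsFiniteMeasure μ] {g : ι → X → ℝ≥0∞}
    {h : Y → ℝ} {u : X → ℝ} (hr : Measurable (uncurry r)) (hg : ∀ i, AEMeasurable (g i) m)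
    (hle : ∀ i, ∀ᵐ y ∂μ, ∫⁻ x, r x y * g i x ∂m ≤ 1)
    (hliminf : ∀ᵐ y ∂ρ, 1 ≤ liminf (fun i => ∫⁻ x, r x y * g i x ∂m) l)
    (hμfin : ∀ᵐ x ∂m, ∫⁻ y, r x y ∂μ < ∞)
    (hh : AEMeasurable h ρ) (hneg : ∀ᵐ y ∂ρ, h y ≤ 0)
    (hhfin : ∀ᵐ x ∂m, ∫⁻ y, r x y * ENNReal.ofReal |h y| ∂ρ < ∞)
    (hu : ∀ᵐ x ∂m, u x = (∫⁻ y, r x y ∂μ).toReal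
      - (∫⁻ y, r x y * ENNReal.ofReal (-h y) ∂ρ).toReal)
    (hpos : ∀ᵐ x ∂m, 0 ≤ u x) :
    Integrable h ρ ∧ ∫ y, |h y| ∂ρ ≤ (μ Set.univ).toReal := by
  have habs (x : X) :
      ∫⁻ y, r x y * ENNReal.ofReal (-h y) ∂ρ = ∫⁻ y, r x y * ENNReal.ofReal |h y| ∂ρ :=
    lintegral_congr_ae <| hneg.mono fun y hy => by simp only [abs_of_nonpos hy]
  have hdom : ∀ᵐ x ∂m, ∫⁻ y, r x y * ‖h y‖ₑ ∂ρ ≤ ∫⁻ y, r x y ∂μ := by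
    filter_upwards [hμfin, hhfin, hu, hpos] with x hμx hhx hux hx
    rw [hux, habs, sub_nonneg, ENNReal.toReal_le_toReal hhx.ne hμx.ne] at hx
    simpa only [Real.enorm_eq_ofReal_abs] using hx
  have hmass : ∫⁻ y, ‖h y‖ₑ ∂ρ ≤ μ Set.univ :=
    lintegral_le_measure_univ_of_potential_le hr hg hle hliminf hh.enorm hdom
  refine ⟨⟨hh.aestronglyMeasurable, hmass.trans_lt (measure_lt_top μ _)⟩, ?_⟩
  calc ∫ y, |h y| ∂ρ
      = (∫⁻ y, ‖h y‖ₑ ∂ρ).toReal := integral_norm_eq_lintegral_enorm hh.aestronglyMeasurable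
    _ ≤ (μ Set.univ).toReal := ENNReal.toReal_mono (measure_ne_top μ _) hmass

end Potential

/-- Analytic content of Remark (iii), Section 4 of the paper: let
`r : E × E → [0,∞]` be a symmetric measurable kernel admitting a sequence of
measurable `g n : E → [0,∞]` whose potentials `Rg_n(x) = ∫ r(x,y) g_n(y) m(dy)`
are nondecreasing in `n`, bounded by `1`, and converge to `1` at every `x`.
Let `μ` be a finite measure with `Rμ(x) = ∫ r(x,y) μ(dy) < ∞` for `m`-a.e. `x`,
let `h : E → ℝ` be measurable, nonpositive, with
`∫ r(x,y)|h(y)| m(dy) < ∞` for `m`-a.e. `x`, and let `u : E → ℝ` be measurable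
with `u(x) = Rμ(x) − ∫ r(x,y)(−h(y)) m(dy)` for `m`-a.e. `x`. If `u ≥ 0`
`m`-a.e., then `h ∈ L¹(E;m)` and `∫ |h| dm ≤ μ(E)`. -/
theorem nonlinearity_integrable_of_nonneg_solution
    {E : Type*} [MeasurableSpace E]
    (m : Measure E) [SigmaFinite m]
    (r : E → E → ENNReal)
    (hr : Measurable (Function.uncurry r))
    (hsymm : ∀ x y, r x y = r y x)
    (g : ℕ → E → ENNReal) (hg : ∀ n, Measurable (g n))
    (hmono : ∀ x, Monotone fun n => ∫⁻ y, r x y * g n y ∂m)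
    (hle : ∀ n x, (∫⁻ y, r x y * g n y ∂m) ≤ 1)
    (hlim : ∀ x, Filter.Tendsto (fun n => ∫⁻ y, r x y * g n y ∂m)
      Filter.atTop (nhds 1))
    (μ : Measure E) [IsFiniteMeasure μ]
    (hμfin : ∀ᵐ x ∂m, (∫⁻ y, r x y ∂μ) < ⊤)
    (h : E → ℝ) (hhmeas : Measurable h) (hhneg : ∀ x, h x ≤ 0)
    (hhfin : ∀ᵐ x ∂m, (∫⁻ y, r x y * ENNReal.ofReal |h y| ∂m) < ⊤)
    (u : E → ℝ) (humeas : Measurable u)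
    (hu : ∀ᵐ x ∂m, u x = (∫⁻ y, r x y ∂μ).toReal
        - (∫⁻ y, r x y * ENNReal.ofReal (-h y) ∂m).toReal)
    (hpos : ∀ᵐ x ∂m, 0 ≤ u x) :
    Integrable h m ∧ ∫ x, |h x| ∂m ≤ (μ Set.univ).toReal := by
  have hflip (n : ℕ) (x : E) : ∫⁻ y, r y x * g n y ∂m = ∫⁻ y, r x y * g n y ∂m := by
    simp only [fun y => hsymm y x]
  exact nonlinearity_integrable_of_nonneg_solution_general hr (fun n => (hg n).aemeasurable)
    (fun n => ae_of_all _ fun x => (hflip n x).trans_le (hle n x))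
    (ae_of_all _ fun x => by simpa only [hflip] using (hlim x).liminf_eq.ge)
    hμfin hhmeas.aemeasurable (ae_of_all _ hhneg) hhfin hu hpos
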